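/- (Remark 1, c → ∞ limit) Let n ≥ 1, P_F ∈ (0,1), and α ∈ (0,1) be fixed. For c > 0 set θ₀(c) = 2·Q(c) and θ₁(c) = 2·Q(αc), let γ(c) be the least natural number with ∑_{l=0}^{γ(c)} C(n,l) θ₀(c)^l (1−θ₀(c))^{n−l} ≥ 1 − P_F, let ζ(c) = (P_F − ℙ(Bin(n,θ₀(c)) > γ(c))) / ℙ(Bin(n,θ₀(c)) = γ(c)), and let P_D(c) = ℙ(Bin(n,θ₁(c)) > γ(c)) + ζ(c)·ℙ(Bin(n,θ₁(c)) = γ(c)). Then P_D(c) → P_F as c → ∞. -/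

import Mathlib

open MeasureTheory ProbabilityTheory

/-- The standard normal tail function `Q(x) = ℙ(Z > x)` for `Z ~ N(0,1)`. -/
noncomputable def Q (x : ℝ) : ℝ := ((gaussianReal 0 1) (Set.Ioi x)).toReal

/-- Binomial probability mass: `ℙ(Bin(n,θ) = l) = C(n,l) θ^l (1-θ)^(n-l)`. -/
noncomputable def binomPMF (n : ℕ) (θ : ℝ) (l : ℕ) : ℝ :=
  (n.choose l : ℝ) * θ ^ l * (1 - θ) ^ (n - l)

/-- Binomial CDF: `ℙ(Bin(n,θ) ≤ γ)`. -/
noncomputable def binomCDF (n : ℕ) (θ : ℝ) (γ : ℕ) : ℝ :=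
  ∑ l ∈ Finset.range (γ + 1), binomPMF n θ l

/-- Binomial tail: `ℙ(Bin(n,θ) > γ)`. -/
noncomputable def binomTail (n : ℕ) (θ : ℝ) (γ : ℕ) : ℝ :=
  ∑ l ∈ Finset.Icc (γ + 1) n, binomPMF n θ l

/-!
As `c → ∞`, both `θ₀(c)` and `θ₁(c)` tend to `0`, so the two hypotheses become indistinguishable;
a randomized test of a distribution against itself detects with exactly its false-alarm probability.
The threshold does not disturb this limit: `ℙ(Bin(n, θ₀) = 0) → 1 > 1 - P_F` forces it to be `0`
eventually, where `P_D` is continuous in `(θ₀, θ₁)` at `(0, 0)`.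
-/

section

open Filter Topology

theorem Q_eq_one_sub_cdf (x : ℝ) : Q x = 1 - cdf (gaussianReal 0 1) x := by
  rw [cdf_eq_real, ← probReal_compl_eq_one_sub measurableSet_Iic, Set.compl_Iic]
  rfl

theorem tendsto_Q_atTop : Tendsto Q atTop (𝓝 0) := by
  simpa only [← Q_eq_one_sub_cdf, sub_self] using
    (tendsto_cdf_atTop (gaussianReal 0 1)).const_sub 1

theorem tendsto_two_mul_Q_atTop : Tendsto (fun x => 2 * Q x) atTop (𝓝 0) := by
  simpa only [mul_zero] using tendsto_Q_atTop.const_mul 2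

theorem isLeast_setOf_le_iff {ι β : Type*} [LinearOrder ι] [LinearOrder β] {F : ι → β} {b : β}
    {m : ι} : IsLeast {k | b ≤ F k} m ↔ b ≤ F m ∧ ∀ k < m, F k < b := by
  simp only [← minimal_iff_isLeast, minimal_iff_forall_lt, Set.mem_ofPred_eq, not_le]

theorem continuous_binomPMF (n l : ℕ) : Continuous fun θ => binomPMF n θ l := by
  unfold binomPMF
  fun_prop

theorem continuous_binomCDF (n k : ℕ) : Continuous fun θ => binomCDF n θ k :=
  continuous_finsetSum _ fun l _ => continuous_binomPMF n l

theorem continuous_binomTail (n k : ℕ) : Continuous fun θ => binomTail n θ k :=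
  continuous_finsetSum _ fun l _ => continuous_binomPMF n l

theorem binomPMF_zero_right (n : ℕ) (θ : ℝ) : binomPMF n θ 0 = (1 - θ) ^ n := by
  simp [binomPMF]

theorem binomCDF_zero_right (n : ℕ) (θ : ℝ) : binomCDF n θ 0 = (1 - θ) ^ n := by
  rw [binomCDF, zero_add, Finset.sum_range_one, binomPMF_zero_right]

/-- The probability `ζ` with which a test that rejects the null hypothesis `Bin(n, θ₀)` above the
threshold `k` must also reject at `k` in order to have false-alarm probability `P_F`. It has the
junk value `0` where `binomPMF n θ₀ k = 0`. -/
noncomputable def randomization (n : ℕ) (θ₀ P_F : ℝ) (k : ℕ) : ℝ :=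
  (P_F - binomTail n θ₀ k) / binomPMF n θ₀ k

/-- The probability `P_D` that the test with threshold `k`, randomized so as to have false-alarm
probability `P_F` under `Bin(n, θ₀)`, rejects when the distribution is `Bin(n, θ₁)`. -/
noncomputable def detectionProb (n : ℕ) (θ₀ θ₁ P_F : ℝ) (k : ℕ) : ℝ :=
  binomTail n θ₁ k + randomization n θ₀ P_F k * binomPMF n θ₁ k

variable {n k : ℕ} {θ P_F : ℝ}

theorem detectionProb_self (hθ : binomPMF n θ k ≠ 0) : detectionProb n θ θ P_F k = P_F := by
  rw [detectionProb, randomization, div_mul_cancel₀ _ hθ, add_sub_cancel]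

variable {ι : Type*} {l : Filter ι} {θ₀ θ₁ : ι → ℝ}

theorem tendsto_detectionProb (hθ : binomPMF n θ k ≠ 0)
    (h₀ : Tendsto θ₀ l (𝓝 θ)) (h₁ : Tendsto θ₁ l (𝓝 θ)) :
    Tendsto (fun i => detectionProb n (θ₀ i) (θ₁ i) P_F k) l (𝓝 P_F) := by
  have pmf := (continuous_binomPMF n k).tendsto θ
  have tail := (continuous_binomTail n k).tendsto θ
  have hζ : Tendsto (fun i => randomization n (θ₀ i) P_F k) l (𝓝 (randomization n θ P_F k)) :=
    ((tail.comp h₀).const_sub P_F).div (pmf.comp h₀) hθ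
  have hD : Tendsto (fun i => detectionProb n (θ₀ i) (θ₁ i) P_F k) l
      (𝓝 (detectionProb n θ θ P_F k)) :=
    (tail.comp h₁).add (hζ.mul (pmf.comp h₁))
  rwa [detectionProb_self hθ] at hD

theorem eventually_threshold_eq_zero {γ : ι → ℕ} (hPF : 0 < P_F) (h₀ : Tendsto θ₀ l (𝓝 0))
    (hγ : ∀ᶠ i in l, IsLeast {k | 1 - P_F ≤ binomCDF n (θ₀ i) k} (γ i)) :
    ∀ᶠ i in l, γ i = 0 := by
  have hcdf : Tendsto (fun i => binomCDF n (θ₀ i) 0) l (𝓝 1) := by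
    have h := ((continuous_binomCDF n 0).tendsto 0).comp h₀
    rwa [binomCDF_zero_right, sub_zero, one_pow] at h
  filter_upwards [hcdf.eventually_const_le (sub_lt_self 1 hPF), hγ] with i hi hleast
  exact Nat.le_zero.mp (hleast.2 hi)

theorem stmt10_general {γ : ι → ℕ} (hPF : 0 < P_F)
    (h₀ : Tendsto θ₀ l (𝓝 0)) (h₁ : Tendsto θ₁ l (𝓝 0))
    (hγ : ∀ᶠ i in l, IsLeast {k | 1 - P_F ≤ binomCDF n (θ₀ i) k} (γ i)) :
    Tendsto (fun i => detectionProb n (θ₀ i) (θ₁ i) P_F (γ i)) l (𝓝 P_F) := by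
  have hpmf : binomPMF n 0 0 ≠ 0 := by simp [binomPMF_zero_right]
  refine (tendsto_detectionProb hpmf h₀ h₁).congr' ?_
  filter_upwards [eventually_threshold_eq_zero hPF h₀ hγ] with i hi
  rw [hi]

end

theorem stmt10 (n : ℕ) (hn : 1 ≤ n) (P_F α : ℝ) (hPF : P_F ∈ Set.Ioo (0 : ℝ) 1)
    (hα : α ∈ Set.Ioo (0 : ℝ) 1) (γ : ℝ → ℕ)
    (hγ : ∀ c : ℝ, 0 < c →
      (1 - P_F ≤ binomCDF n (2 * Q c) (γ c) ∧
        ∀ k < γ c, binomCDF n (2 * Q c) k < 1 - P_F)) :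
    Filter.Tendsto
      (fun c : ℝ => binomTail n (2 * Q (α * c)) (γ c) +
        ((P_F - binomTail n (2 * Q c) (γ c)) / binomPMF n (2 * Q c) (γ c)) *
          binomPMF n (2 * Q (α * c)) (γ c))
      Filter.atTop (nhds P_F) :=
  stmt10_general hPF.1 tendsto_two_mul_Q_atTop
    (tendsto_two_mul_Q_atTop.comp (Filter.tendsto_id.const_mul_atTop hα.1))
    ((Filter.eventually_gt_atTop 0).mono fun c hc => isLeast_setOf_le_iff.2 (hγ c hc))
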